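/- Let (R₁, R₀, g, res, tr) be a C₂-Green functor and let F(R) = (F₁, F₀, G, Res, Tr, N) be the C₂-Tambara functor with F₁ = {(n,x) ∈ R₁ × R₁ : res(n) = res(x)²}, F₀ = {(n,x) ∈ R₁ × R₀ : res(n) = x·g(x)}, coordinatewise multiplication, additions (n,x)+(n',x') = (n+n'+tr(res(x)·res(x')), x+x') on F₁ and (n,x)+(n',x') = (n+n'+tr(x·g(x')), x+x') on F₀, G(n,x) = (n, g(x)), Res(n,x) = (n, res(x)), Tr(n,x) = (2n + tr(x²), tr(x)), and N(n,x) = (n², n). Let (S₁, S₀, g_S, res_S, tr_S, N_S) be any C₂-Tambara functor and let (φ₁, φ₀) be a morphism of C₂-Green functors from its underlying C₂-Green functor to (R₁, R₀, g, res, tr). Then the maps ψ₁ : S₁ → F₁, ψ₁(s) = (φ₁(N_S(res_S(s))), φ₁(s)), and ψ₀ : S₀ → F₀, ψ₀(u) = (φ₁(N_S(u)), φ₀(u)), are well defined (their outputs satisfy the defining conditions of F₁ and F₀) and form a morphism of C₂-Tambara functors ψ : S → F(R) whose composite with the second-coordinate projections ε₁(n,x) = x, ε₀(n,x) = x equals (φ₁,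 φ₀). -/

import Mathlib

/-!
Every clause is an identity in the norm of `S` pushed forward along `φ₁`. The only clauses that are
not direct rewriting with the Tambara axioms and the compatibility of `(φ₁, φ₀)` with `g`, `res`,
`tr` are the transfer and the norm. There the double coset formulas for `S` give
`N (res (tr u)) = N (u + g u) = 2 N u + tr (u * g (g u)) = 2 N u + tr (u ^ 2)` and
`N (res (N u)) = N (u * g u) = (N u) ^ 2`. The twisted addition on `F₁` records the
sum formula for `N ∘ res`, the lemma `C2Tambara.N_res_add`.
-/

universe u v

structure C2Green : Type (u + 1) where
  R1 : Type u
  R0 : Type u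
  [ring1 : CommRing R1]
  [ring0 : CommRing R0]
  g : R0 →+* R0
  res : R1 →+* R0
  tr : R0 →+ R1
  g_invol : ∀ x, g (g x) = x
  g_res : ∀ a, g (res a) = res a
  tr_g : ∀ x, tr (g x) = tr x
  res_tr : ∀ x, res (tr x) = x + g x
  frob : ∀ a x, a * tr x = tr (res a * x)

attribute [instance] C2Green.ring1 C2Green.ring0

structure C2Tambara extends C2Green.{u} where
  N : R0 → R1
  N_one : N 1 = 1
  N_mul : ∀ x y, N (x * y) = N x * N y
  N_g : ∀ x, N (g x) = N x
  res_N : ∀ x, res (N x) = x * g x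
  N_add : ∀ x y, N (x + y) = N x + N y + tr (x * g y)

section

variable {R₁ R₀ : Type v} [CommRing R₁] [CommRing R₀]

/-- The twisted addition on `F₁`. -/
def F1add (res : R₁ →+* R₀) (tr : R₀ →+ R₁) (p q : R₁ × R₁) : R₁ × R₁ :=
  (p.1 + q.1 + tr (res p.2 * res q.2), p.2 + q.2)

/-- The twisted addition on `F₀`. -/
def F0add (g : R₀ →+* R₀) (tr : R₀ →+ R₁) (p q : R₁ × R₀) : R₁ × R₀ :=
  (p.1 + q.1 + tr (p.2 * g q.2), p.2 + q.2)

/-- The Weyl action `G` on `F₀`. -/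
def Gmap (g : R₀ →+* R₀) (p : R₁ × R₀) : R₁ × R₀ := (p.1, g p.2)

/-- The restriction `Res : F₁ → F₀`. -/
def Resmap (res : R₁ →+* R₀) (p : R₁ × R₁) : R₁ × R₀ := (p.1, res p.2)

/-- The transfer `Tr : F₀ → F₁`. -/
def Trmap (tr : R₀ →+ R₁) (p : R₁ × R₀) : R₁ × R₁ := (2 * p.1 + tr (p.2 ^ 2), tr p.2)

/-- The norm `N : F₀ → F₁`. -/
def Nmap (p : R₁ × R₀) : R₁ × R₁ := (p.1 ^ 2, p.1)

/-- `(ψ₁, ψ₀)` is a morphism of `C₂`-Tambara functors from `S` to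
`F(R) = (F₁, F₀, G, Res, Tr, N)`: both components land in the defining subsets,
are ring homomorphisms for the `F`-structures, and commute with the Weyl action,
restriction, transfer, and norm. -/
def IsTambaraMorphismToF (S : C2Tambara.{u})
    (g : R₀ →+* R₀) (res : R₁ →+* R₀) (tr : R₀ →+ R₁)
    (ψ₁ : S.R1 → R₁ × R₁) (ψ₀ : S.R0 → R₁ × R₀) : Prop :=
  (∀ s, res (ψ₁ s).1 = (res (ψ₁ s).2) ^ 2) ∧
  (∀ u, res (ψ₀ u).1 = (ψ₀ u).2 * g (ψ₀ u).2) ∧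
  (ψ₁ 1 = (1, 1)) ∧
  (∀ s s', ψ₁ (s + s') = F1add res tr (ψ₁ s) (ψ₁ s')) ∧
  (∀ s s', ψ₁ (s * s') = ((ψ₁ s).1 * (ψ₁ s').1, (ψ₁ s).2 * (ψ₁ s').2)) ∧
  (ψ₀ 1 = (1, 1)) ∧
  (∀ u u', ψ₀ (u + u') = F0add g tr (ψ₀ u) (ψ₀ u')) ∧
  (∀ u u', ψ₀ (u * u') = ((ψ₀ u).1 * (ψ₀ u').1, (ψ₀ u).2 * (ψ₀ u').2)) ∧
  (∀ u, ψ₀ (S.g u) = Gmap g (ψ₀ u)) ∧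
  (∀ s, ψ₀ (S.res s) = Resmap res (ψ₁ s)) ∧
  (∀ u, ψ₁ (S.tr u) = Trmap tr (ψ₀ u)) ∧
  (∀ u, ψ₁ (S.N u) = Nmap (ψ₀ u))

end

namespace C2Tambara

variable (S : C2Tambara.{u})

theorem N_res_tr (u : S.R0) : S.N (S.res (S.tr u)) = 2 * S.N u + S.tr (u ^ 2) := by
  rw [S.res_tr, S.N_add, S.N_g, S.g_invol, two_mul, sq]

theorem N_res_add (s s' : S.R1) :
    S.N (S.res (s + s')) =
      S.N (S.res s) + S.N (S.res s') + S.tr (S.res s * S.res s') := by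
  rw [map_add, S.N_add, S.g_res]

theorem N_res_N (u : S.R0) : S.N (S.res (S.N u)) = S.N u ^ 2 := by
  rw [S.res_N, S.N_mul, S.N_g, sq]

end C2Tambara

/-- Given a `C₂`-Green functor `(R₁, R₀, g, res, tr)`, a `C₂`-Tambara functor `S`, and a
morphism `(φ₁, φ₀)` of `C₂`-Green functors from the underlying Green functor of `S` to
`R`, the maps `ψ₁(s) = (φ₁(N_S(res_S s)), φ₁ s)` and `ψ₀(u) = (φ₁(N_S u), φ₀ u)` are
well defined and form a morphism of `C₂`-Tambara functors `S → F(R)` whose composite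
with the second-coordinate projections is `(φ₁, φ₀)`. -/
theorem lift_is_Tambara_morphism {R₁ R₀ : Type v} [CommRing R₁] [CommRing R₀]
    (g : R₀ →+* R₀) (res : R₁ →+* R₀) (tr : R₀ →+ R₁)
    (g_invol : ∀ x, g (g x) = x)
    (g_res : ∀ a, g (res a) = res a)
    (tr_g : ∀ x, tr (g x) = tr x)
    (res_tr : ∀ x, res (tr x) = x + g x)
    (frob : ∀ a x, a * tr x = tr (res a * x))
    (S : C2Tambara.{u})
    (φ₁ : S.R1 →+* R₁) (φ₀ : S.R0 →+* R₀)
    (φ_g : ∀ u, φ₀ (S.g u) = g (φ₀ u))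
    (φ_res : ∀ s, φ₀ (S.res s) = res (φ₁ s))
    (φ_tr : ∀ u, φ₁ (S.tr u) = tr (φ₀ u)) :
    IsTambaraMorphismToF S g res tr
      (fun s => (φ₁ (S.N (S.res s)), φ₁ s))
      (fun u => (φ₁ (S.N u), φ₀ u)) ∧
    (∀ s, ((φ₁ (S.N (S.res s)), φ₁ s) : R₁ × R₁).2 = φ₁ s) ∧
    (∀ u, ((φ₁ (S.N u), φ₀ u) : R₁ × R₀).2 = φ₀ u) := by
  refine ⟨⟨fun s => ?_, fun u => ?_, ?_, fun s s' => ?_, fun s s' => ?_, ?_, fun u u' => ?_,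
    fun u u' => ?_, fun u => ?_, fun s => ?_, fun u => ?_, fun u => ?_⟩,
    fun _ => rfl, fun _ => rfl⟩
  · change res (φ₁ (S.N (S.res s))) = res (φ₁ s) ^ 2
    rw [← φ_res, S.res_N, S.g_res, map_mul, φ_res, sq]
  · change res (φ₁ (S.N u)) = φ₀ u * g (φ₀ u)
    rw [← φ_res, S.res_N, map_mul, φ_g]
  · simp [S.N_one]
  · simp only [F1add, S.N_res_add, map_add φ₁, map_mul φ₀, φ_tr, φ_res]
  · simp [S.N_mul]
  · simp [S.N_one]
  · simp [F0add, S.N_add, φ_tr, φ_g]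
  · simp [S.N_mul]
  · simp [Gmap, S.N_g, φ_g]
  · simp [Resmap, φ_res]
  · simp [Trmap, S.N_res_tr, φ_tr, two_mul]
  · simp [Nmap, S.N_res_N]
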